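/- If n ≥ 7, then every m×n real matrix with all entries nonnegative and classical rank equal to 3 has nonnegative rank strictly less than n. -/

import Mathlib

/-!
A rank-three nonnegative matrix records the values of linear functionals on vectors of `K ^ 3`, one
per column, so it suffices to factor seven columns through six. If one column lies in the cone of
the others it can be dropped. Otherwise the seven vectors are, in projection, the vertices of a
convex heptagon. Suppose `p₀` is adjacent to rescaled vectors `u₁, …, u₆` such that
`p₀, u₁, u₂, u₃` and `p₀, u₄, u₅, u₆` are parallelograms. These seven vectors are then seven of the
nine sums `αₐ + βᵦ` with `a, b ∈ Fin 3`, the missing ones being `u₃ + u₆ - p₀` and `u₁ + u₄ - p₀`,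
and a nonnegative matrix whose rows have the form `Uₐ + Wᵦ` has nonnegative rank at most `3 + 3`.
The two missing sums are nonnegative under two inequalities between brackets of the heptagon. If
every vertex in the role of `p₀` violated one of them, then a vertex violating the first would force
the third vertex after it to violate the first as well, so the same inequality would fail all around
the heptagon; multiplying these failures, and the Plücker relations, around the heptagon gives a
contradiction.
-/

open Matrix Module

theorem exists_dual_of_rank_le {K m n : Type*} [Field K] [Fintype n] {A : Matrix m n K} {d : ℕ}
    (hA : A.rank ≤ d) :
    ∃ (f : m → Dual K (Fin d → K)) (p : n → Fin d → K), ∀ i j, A i j = f i (p j) := by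
  have hfin : finrank K (LinearMap.range A.mulVecLin) ≤ finrank K (Fin d → K) := by
    rw [finrank_fin_fun]
    exact hA
  obtain ⟨φ, hφ⟩ := finrank_le_iff_exists_linearMap.1 hfin
  obtain ⟨ψ, hψ⟩ := φ.exists_leftInverse_of_injective (LinearMap.ker_eq_bot.2 hφ)
  classical
  let col (j : n) : LinearMap.range A.mulVecLin := ⟨A.col j, Pi.single j 1, by simp⟩
  refine ⟨fun i => LinearMap.proj i ∘ₗ Submodule.subtype _ ∘ₗ ψ, fun j => φ (col j),
    fun i j => ?_⟩
  have hcol : ψ (φ (col j)) = col j := LinearMap.congr_fun hψ _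
  simp [hcol, col]

section NonnegRank

variable {R K m n n' ι : Type*}

/-- `HasNonnegRankLE A k` says that the nonnegative rank of `A` is at most `k`. -/
def HasNonnegRankLE [Semiring R] [Preorder R] (A : Matrix m n R) (k : ℕ) : Prop :=
  ∃ (B : Matrix m (Fin k) R) (C : Matrix (Fin k) n R),
    (∀ i j, 0 ≤ B i j) ∧ (∀ i j, 0 ≤ C i j) ∧ A = B * C

namespace HasNonnegRankLE

section Semiring

variable [Semiring R] [Preorder R] {A : Matrix m n R} {k : ℕ}

theorem of_mul [Fintype ι] {B : Matrix m ι R} {C : Matrix ι n R}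
    (hB : ∀ i j, 0 ≤ B i j) (hC : ∀ i j, 0 ≤ C i j) :
    HasNonnegRankLE (B * C) (Fintype.card ι) := by
  let e := (Fintype.equivFin ι).symm
  exact ⟨B.submatrix id e, C.submatrix e id, fun _ _ => hB _ _, fun _ _ => hC _ _,
    (submatrix_mul_equiv B C id e id).symm⟩

theorem submatrix_cols (h : HasNonnegRankLE A k) (e : n' → n) :
    HasNonnegRankLE (A.submatrix id e) k := by
  obtain ⟨B, C, hB, hC, rfl⟩ := h
  exact ⟨B, C.submatrix id e, hB, fun _ _ => hC _ _, rfl⟩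

protected theorem fromCols {A' : Matrix m n' R} {k' : ℕ} (h : HasNonnegRankLE A k)
    (h' : HasNonnegRankLE A' k') : HasNonnegRankLE (fromCols A A') (k + k') := by
  obtain ⟨B, C, hB, hC, rfl⟩ := h
  obtain ⟨B', C', hB', hC', rfl⟩ := h'
  have hblocks : fromCols (B * C) (B' * C') = fromCols B B' * fromBlocks C 0 0 C' := by
    simp [fromCols_mul_fromBlocks]
  rw [hblocks, show k + k' = Fintype.card (Fin k ⊕ Fin k') by simp]
  refine of_mul ?_ ?_
  · rintro i (j | j)
    exacts [hB i j, hB' i j]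
  · rintro (i | i) (j | j)
    exacts [hC i j, le_rfl, le_rfl, hC' i j]

theorem card_cols [ZeroLEOneClass R] [Fintype n] (hA : ∀ i j, 0 ≤ A i j) :
    HasNonnegRankLE A (Fintype.card n) := by
  classical
  have h := of_mul hA (C := (1 : Matrix n n R)) fun i j => by
    rw [one_apply]
    split_ifs <;> simp
  rwa [Matrix.mul_one] at h

theorem of_submatrix_embedding [ZeroLEOneClass R] [Fintype n] [Fintype n']
    (hA : ∀ i j, 0 ≤ A i j) (e : n' ↪ n) (h : HasNonnegRankLE (A.submatrix id e) k) :
    HasNonnegRankLE A (k + (Fintype.card n - Fintype.card n')) := by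
  classical
  let σ : n' ⊕ ↑(Set.range e)ᶜ ≃ n :=
    ((Equiv.ofInjective e e.injective).sumCongr (Equiv.refl _)).trans (Equiv.Set.sumCompl _)
  let A' : Matrix m ↑(Set.range e)ᶜ R := A.submatrix id fun j => ↑j
  have hcols : fromCols (A.submatrix id e) A' = A.submatrix id σ := by
    ext i (j | j) <;> rfl
  have hcard : Fintype.card ↑(Set.range e)ᶜ = Fintype.card n - Fintype.card n' := by
    rw [Fintype.card_compl_set, Set.card_range_of_injective e.injective]
  have hsplit := (h.fromCols (card_cols (A := A') fun _ _ => hA _ _)).submatrix_cols σ.symm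
  rw [hcols, hcard] at hsplit
  simpa using hsplit

end Semiring

/-- Moving the minimum of `U i` from `U i` to `W i` makes both summands nonnegative. -/
theorem of_fst_add_snd {σ τ : Type*} [Ring R] [LinearOrder R] [IsOrderedRing R] [Fintype σ]
    [Fintype τ] [Nonempty σ] {U : m → σ → R} {W : m → τ → R}
    (h : ∀ i a b, 0 ≤ U i a + W i b) :
    HasNonnegRankLE (of fun i (x : σ × τ) => U i x.1 + W i x.2)
      (Fintype.card σ + Fintype.card τ) := by
  classical
  choose a₀ ha₀ using fun i => Finite.exists_min (U i)
  let B : Matrix m (σ ⊕ τ) R := fromCols (of fun i a => U i a - U i (a₀ i))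
    (of fun i b => U i (a₀ i) + W i b)
  let C : Matrix (σ ⊕ τ) (σ × τ) R := fromRows ((1 : Matrix σ σ R).submatrix id Prod.fst)
    ((1 : Matrix τ τ R).submatrix id Prod.snd)
  have hBC : of (fun i (x : σ × τ) => U i x.1 + W i x.2) = B * C := by
    ext i x
    suffices U i x.1 + W i x.2 = U i x.1 - U i (a₀ i) + (U i (a₀ i) + W i x.2) by
      simpa [B, C, mul_apply, one_apply]
    abel
  rw [hBC, ← Fintype.card_sum]
  refine of_mul ?_ ?_
  · rintro i (a | b)
    exacts [sub_nonneg.2 (ha₀ i a), h i _ b]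
  · rintro (a | b) x <;> simp only [C, fromRows_apply_inl, fromRows_apply_inr, submatrix_apply,
      one_apply] <;> split_ifs <;> simp

theorem of_mul_diagonal [Field K] [LinearOrder K] [IsStrictOrderedRing K] [Fintype n]
    [DecidableEq n] {A : Matrix m n K} {k : ℕ} {c : n → K} (hc : ∀ j, 0 < c j)
    (h : HasNonnegRankLE (A * diagonal c) k) : HasNonnegRankLE A k := by
  obtain ⟨B, C, hB, hC, hBC⟩ := h
  refine ⟨B, C * diagonal fun j => (c j)⁻¹, hB, fun i j => ?_, ?_⟩
  · rw [mul_diagonal]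
    exact mul_nonneg (hC i j) (inv_pos.2 (hc j)).le
  · rw [← Matrix.mul_assoc, ← hBC, Matrix.mul_assoc, diagonal_mul_diagonal]
    simp [fun j => mul_inv_cancel₀ (hc j).ne']

end HasNonnegRankLE

end NonnegRank

section ConicIndependent

variable {R K M N ι κ : Type*}

section Semiring

variable [Semiring R] [PartialOrder R] [IsOrderedRing R] [AddCommMonoid M] [Module R M]

variable (R) in
/-- A family of vectors is conically independent if none of them is a nonnegative combination of
the others; this is the analogue of linear independence for pointed cones. -/
def ConicIndependent (v : ι → M) : Prop :=
  ∀ i, v i ∉ PointedCone.hull R (v '' {i}ᶜ)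

namespace ConicIndependent

variable {v : ι → M}

theorem ne_zero (h : ConicIndependent R v) (i : ι) : v i ≠ 0 :=
  fun hi => h i (hi ▸ zero_mem _)

theorem comp (h : ConicIndependent R v) {e : κ → ι} (he : e.Injective) :
    ConicIndependent R (v ∘ e) := by
  refine fun i hi => h (e i) (Submodule.span_mono ?_ hi)
  rintro _ ⟨j, hj, rfl⟩
  exact ⟨e j, he.ne hj, rfl⟩

theorem of_map [AddCommMonoid N] [Module R N] (L : M →ₗ[R] N) (h : ConicIndependent R (L ∘ v)) :
    ConicIndependent R v := by
  intro i hi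
  have himage := Submodule.mem_map_of_mem (f := L.restrictScalars {c : R // 0 ≤ c}) hi
  rw [Submodule.map_span, ← Set.image_comp] at himage
  exact h i himage

end ConicIndependent

end Semiring

variable [Field K] [LinearOrder K] [IsStrictOrderedRing K] [AddCommGroup M] [Module K M]

namespace ConicIndependent

variable {v : ι → M}

theorem nonneg_of_sum_smul_eq_zero [Fintype ι] (h : ConicIndependent K v) {c : ι → K}
    (hsum : ∑ i, c i • v i = 0) {i : ι} (hc : ∀ j ≠ i, 0 ≤ c j) : 0 ≤ c i := by
  classical
  by_contra! hi
  have hsplit : (-c i) • v i = ∑ j ∈ Finset.univ.erase i, c j • v j := by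
    rw [neg_smul, neg_eq_iff_add_eq_zero,
      Finset.add_sum_erase _ (fun j => c j • v j) (Finset.mem_univ i), hsum]
  refine h i ((PointedCone.smul_mem_iff _ (neg_pos.2 hi)).1 (hsplit ▸ sum_mem fun j hj => ?_))
  have hji := Finset.ne_of_mem_erase hj
  exact PointedCone.smul_mem _ (hc j hji) (PointedCone.subset_hull ⟨j, hji, rfl⟩)

section PositiveFunctional

variable [Fintype ι] {g : Dual K M} {c : ι → K}

theorem exists_pair_neg (h : ConicIndependent K v) (hg : ∀ i, 0 < g (v i))
    (hsum : ∑ i, c i • v i = 0) (hc : c ≠ 0) : ∃ i j, i ≠ j ∧ c i < 0 ∧ c j < 0 := by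
  obtain ⟨i, hi⟩ : ∃ i, c i < 0 := by
    by_contra! hnonneg
    have hgsum : ∑ i, c i * g (v i) = 0 := by simpa using congrArg g hsum
    rw [Finset.sum_eq_zero_iff_of_nonneg fun i _ => mul_nonneg (hnonneg i) (hg i).le] at hgsum
    exact hc (funext fun i =>
      (mul_eq_zero.1 (hgsum i (Finset.mem_univ i))).resolve_right (hg i).ne')
  by_contra! hother
  exact hi.not_ge (h.nonneg_of_sum_smul_eq_zero hsum fun j hj => hother i j hj.symm hi)

theorem exists_pair_pos (h : ConicIndependent K v) (hg : ∀ i, 0 < g (v i))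
    (hsum : ∑ i, c i • v i = 0) (hc : c ≠ 0) : ∃ i j, i ≠ j ∧ 0 < c i ∧ 0 < c j := by
  simpa using h.exists_pair_neg hg (c := -c) (by simp [hsum]) (neg_ne_zero.2 hc)

theorem linearIndependent_of_card_le_three (h : ConicIndependent K v) (hg : ∀ i, 0 < g (v i))
    (hcard : Fintype.card ι ≤ 3) : LinearIndependent K v := by
  classical
  rw [Fintype.linearIndependent_iff]
  intro c hsum
  by_contra! hne
  have hc : c ≠ 0 := Function.ne_iff.2 hne
  obtain ⟨i, j, hij, hi, hj⟩ := h.exists_pair_neg hg hsum hc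
  obtain ⟨k, l, hkl, hk, hl⟩ := h.exists_pair_pos hg hsum hc
  have hfour : ({i, j, k, l} : Finset ι).card = 4 := by grind
  have := Finset.card_le_univ ({i, j, k, l} : Finset ι)
  omega

end PositiveFunctional

end ConicIndependent

theorem HasNonnegRankLE.of_not_conicIndependent_col {m n : Type*} [Fintype n] {A : Matrix m n K}
    (hA : ∀ i j, 0 ≤ A i j) (h : ¬ ConicIndependent K A.col) :
    HasNonnegRankLE A (Fintype.card n - 1) := by
  classical
  simp only [ConicIndependent, not_forall, not_not] at h
  obtain ⟨j, hj⟩ := h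
  obtain ⟨c, hc⟩ := (Fintype.mem_span_image_iff_exists_fun _).1 hj
  let C : Matrix ↑({j}ᶜ : Set n) n K := of fun l k => if k = j then c l else if ↑l = k then 1 else 0
  have hAC : A = A.submatrix id (fun l : ↑({j}ᶜ : Set n) => ↑l) * C := by
    ext i k
    by_cases hk : k = j
    · subst hk
      have hcomb : A i k = ∑ l, (c l : K) * A i l :=
        (congrFun hc i).symm.trans (Finset.sum_apply i _ _)
      simpa [C, mul_apply, mul_comm] using hcomb
    · rw [mul_apply, Finset.sum_eq_single ⟨k, hk⟩] <;> simp +contextual [C, hk, Subtype.ext_iff]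
  have hcard : Fintype.card n - 1 = Fintype.card ↑({j}ᶜ : Set n) := by
    rw [Fintype.card_compl_set, Set.card_singleton]
  rw [hAC, hcard]
  refine .of_mul (fun _ _ => hA _ _) fun l k => ?_
  simp only [C, of_apply]
  split_ifs
  exacts [(c l).2, zero_le_one, le_rfl]

end ConicIndependent

section Bracket

variable {R : Type*} [CommRing R]

/-- The bracket `[a b c]` of three vectors in `R ^ 3`, i.e. the determinant with rows `a, b, c`. -/
def bracket (a b c : Fin 3 → R) : R :=
  det (of ![a, b, c])

theorem bracket_apply (a b c : Fin 3 → R) :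
    bracket a b c = a 0 * (b 1 * c 2 - b 2 * c 1) - a 1 * (b 0 * c 2 - b 2 * c 0) +
      a 2 * (b 0 * c 1 - b 1 * c 0) := by
  simp only [bracket, det_fin_three, of_apply, cons_val]
  ring

theorem bracket_rotate (a b c : Fin 3 → R) : bracket b c a = bracket a b c := by
  simp only [bracket_apply]
  ring

theorem bracket_swap (a b c : Fin 3 → R) : bracket a c b = -bracket a b c := by
  simp only [bracket_apply]
  ring

theorem ne_of_bracket_ne_zero {ι : Type*} {p : ι → Fin 3 → R} {i j k : ι}
    (h : bracket (p i) (p j) (p k) ≠ 0) : i ≠ j ∧ i ≠ k ∧ j ≠ k := by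
  refine ⟨?_, ?_, ?_⟩ <;> rintro rfl <;> refine h ?_ <;> simp only [bracket_apply] <;> ring

theorem bracket_cramer (a b c d : Fin 3 → R) :
    bracket b c d • a - bracket a c d • b + bracket a b d • c - bracket a b c • d = 0 := by
  ext x
  fin_cases x <;>
    simp only [bracket_apply, Pi.add_apply, Pi.sub_apply, Pi.smul_apply, Pi.zero_apply, smul_eq_mul,
      Fin.reduceFinMk, Fin.zero_eta, Fin.mk_one] <;>
    ring

theorem bracket_cramer_apply (f : Dual R (Fin 3 → R)) (a b c d : Fin 3 → R) :
    bracket b c d * f a - bracket a c d * f b + bracket a b d * f c - bracket a b c * f d = 0 := by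
  simpa using congrArg f (bracket_cramer a b c d)

theorem bracket_plucker (x a b c d : Fin 3 → R) :
    bracket x a c * bracket x b d =
      bracket x a b * bracket x c d + bracket x a d * bracket x b c := by
  simp only [bracket_apply]
  ring

end Bracket

section PositivelyOriented

variable {R K : Type*}

section CommRing

variable [CommRing R] [LinearOrder R]

/-- A sequence of vectors in `R ^ 3` is positively oriented if all brackets with increasing indices
are positive. In projection, such vectors are the vertices of a convex polygon in counterclockwise
order. -/
def PositivelyOriented {n : ℕ} (p : Fin n → Fin 3 → R) : Prop :=
  ∀ i j k, i < j → j < k → 0 < bracket (p i) (p j) (p k)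

theorem PositivelyOriented.rotate {n : ℕ} {p : Fin n → Fin 3 → R} (h : PositivelyOriented p)
    (c : Fin n) : PositivelyOriented fun i => p (c + i) := by
  intro i j k hij hjk
  have hcyclic : (c + i < c + j ∧ c + j < c + k) ∨ (c + j < c + k ∧ c + k < c + i) ∨
      (c + k < c + i ∧ c + i < c + j) := by
    simp only [Fin.lt_def, Fin.val_add_eq_ite] at *
    split_ifs <;> omega
  rcases hcyclic with ⟨h₁, h₂⟩ | ⟨h₁, h₂⟩ | ⟨h₁, h₂⟩
  · exact h _ _ _ h₁ h₂
  · rw [← bracket_rotate]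
    exact h _ _ _ h₁ h₂
  · rw [← bracket_rotate, ← bracket_rotate]
    exact h _ _ _ h₁ h₂

variable [IsStrictOrderedRing R]

theorem mul_apply_le_of_bracket_le {f : Dual R (Fin 3 → R)} {a b c d : Fin 3 → R} {r s t : R}
    (hb : 0 ≤ f b) (hc : 0 ≤ f c) (hd : 0 ≤ f d) (hr : 0 ≤ r) (hbcd : 0 < bracket b c d)
    (habd : 0 ≤ bracket a b d) (hs : r * bracket a c d ≤ s * bracket b c d)
    (ht : r * bracket a b c ≤ t * bracket b c d) : r * f a ≤ s * f b + t * f d := by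
  refine le_of_mul_le_mul_left ?_ hbcd
  calc
    bracket b c d * (r * f a)
      = r * bracket a c d * f b + r * bracket a b c * f d - r * (bracket a b d * f c) := by
        linear_combination r * bracket_cramer_apply f a b c d
    _ ≤ r * bracket a c d * f b + r * bracket a b c * f d :=
        sub_le_self _ (mul_nonneg hr (mul_nonneg habd hc))
    _ ≤ s * bracket b c d * f b + t * bracket b c d * f d := by gcongr
    _ = bracket b c d * (s * f b + t * f d) := by ring

namespace PositivelyOriented

variable {n : ℕ} {p : Fin n → Fin 3 → R} {i j k l m : Fin n}

theorem bracket_mul_bracket_lt_of_common_second (h : PositivelyOriented p) (hij : i < j)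
    (hjk : j < k) (hkl : k < l) (hlm : l < m) :
    bracket (p i) (p j) (p k) * bracket (p j) (p l) (p m) <
      bracket (p i) (p j) (p l) * bracket (p j) (p k) (p m) := by
  have hplucker := bracket_plucker (p j) (p k) (p l) (p m) (p i)
  simp only [bracket_rotate (p i)] at hplucker
  linarith [mul_pos (h j k l hjk hkl) (h i j m hij (hjk.trans (hkl.trans hlm)))]

theorem bracket_mul_bracket_lt_of_common_third (h : PositivelyOriented p) (hij : i < j)
    (hjk : j < k) (hkl : k < l) (hlm : l < m) :
    bracket (p i) (p j) (p k) * bracket (p k) (p l) (p m) <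
        bracket (p i) (p k) (p l) * bracket (p j) (p k) (p m) ∧
      bracket (p i) (p k) (p m) * bracket (p j) (p k) (p l) <
        bracket (p i) (p k) (p l) * bracket (p j) (p k) (p m) := by
  have hplucker := bracket_plucker (p k) (p l) (p m) (p i) (p j)
  simp only [bracket_rotate (p i), bracket_rotate (p j)] at hplucker
  constructor
  · linarith [mul_pos (h i k m (hij.trans hjk) (hkl.trans hlm)) (h j k l hjk hkl)]
  · linarith [mul_pos (h i j k hij hjk) (h k l m hkl hlm)]

theorem bracket_mul_bracket_lt_of_common_fourth (h : PositivelyOriented p) (hij : i < j)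
    (hjk : j < k) (hkl : k < l) (hlm : l < m) :
    bracket (p i) (p j) (p l) * bracket (p k) (p l) (p m) <
      bracket (p i) (p k) (p l) * bracket (p j) (p l) (p m) := by
  have hplucker := bracket_plucker (p l) (p m) (p i) (p j) (p k)
  simp only [bracket_rotate (p i), bracket_rotate (p j), bracket_rotate (p k)] at hplucker
  linarith [mul_pos (h j k l hjk hkl) (h i l m (hij.trans (hjk.trans hkl)) hlm)]

end PositivelyOriented

end CommRing

section Ordering

variable [Field K] [LinearOrder K] [IsStrictOrderedRing K] {ι : Type*} {p : ι → Fin 3 → K}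
  {g : Dual K (Fin 3 → K)} {i j k l : ι}

theorem ConicIndependent.bracket_ne_zero (hp : ConicIndependent K p) (hg : ∀ i, 0 < g (p i))
    (hij : i ≠ j) (hik : i ≠ k) (hjk : j ≠ k) : bracket (p i) (p j) (p k) ≠ 0 := by
  have hinj : Function.Injective ![i, j, k] := by
    intro a b
    fin_cases a <;> fin_cases b <;> simp [*, Ne.symm]
  have hli := (hp.comp hinj).linearIndependent_of_card_le_three (fun _ => hg _) (by simp)
  have hrows : (of ![p i, p j, p k]).row = p ∘ ![i, j, k] := by
    ext a
    fin_cases a <;> rfl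
  rw [← hrows, linearIndependent_rows_iff_isUnit, isUnit_iff_isUnit_det] at hli
  exact hli.ne_zero

theorem ConicIndependent.bracket_pos_of_bracket_pos (hp : ConicIndependent K p)
    (hg : ∀ i, 0 < g (p i)) (hijk : 0 < bracket (p i) (p j) (p k))
    (hikl : 0 < bracket (p i) (p k) (p l)) :
    0 < bracket (p i) (p j) (p l) ∧ 0 < bracket (p j) (p k) (p l) := by
  obtain ⟨hij, hik, hjk⟩ := ne_of_bracket_ne_zero hijk.ne'
  obtain ⟨-, hil, hkl⟩ := ne_of_bracket_ne_zero hikl.ne'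
  have hjl : j ≠ l := by
    rintro rfl
    rw [bracket_swap] at hikl
    linarith
  have hinj : Function.Injective ![i, j, k, l] := by
    intro a b
    fin_cases a <;> fin_cases b <;> simp [*, Ne.symm]
  let c : Fin 4 → K := ![bracket (p j) (p k) (p l), -bracket (p i) (p k) (p l),
    bracket (p i) (p j) (p l), -bracket (p i) (p j) (p k)]
  have hsum : ∑ a, c a • (p ∘ ![i, j, k, l]) a = 0 := by
    simpa [c, Fin.sum_univ_four, sub_eq_add_neg] using bracket_cramer (p i) (p j) (p k) (p l)
  have hc : c ≠ 0 := fun h => hikl.ne' (neg_eq_zero.1 (congrFun h 1))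
  obtain ⟨a, b, hab, ha, hb⟩ := (hp.comp hinj).exists_pair_pos (fun _ => hg _) hsum hc
  have hc₁ : c 1 < 0 := neg_neg_of_pos hikl
  have hc₃ : c 3 < 0 := neg_neg_of_pos hijk
  have hpos {x : Fin 4} (hx : 0 < c x) : x = 0 ∨ x = 2 := by
    fin_cases x
    exacts [.inl rfl, absurd hx hc₁.not_gt, .inr rfl, absurd hx hc₃.not_gt]
  rcases hpos ha, hpos hb with ⟨rfl | rfl, rfl | rfl⟩
  exacts [absurd rfl hab, ⟨hb, ha⟩, ⟨ha, hb⟩, absurd rfl hab]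

theorem exists_equiv_fin_of_isStrictTotalOrder [Fintype ι] {n : ℕ} (hn : Fintype.card ι = n)
    (r : ι → ι → Prop) [IsStrictTotalOrder ι r] :
    ∃ e : Fin n ≃ ι, ∀ a b, a < b → r (e a) (e b) := by
  classical
  let _ := linearOrderOfSTO r
  let e := Fintype.orderIsoFinOfCardEq ι hn
  exact ⟨e.toEquiv, fun _ _ => e.lt_iff_lt.2⟩

theorem ConicIndependent.exists_equiv_positivelyOriented [Fintype ι] [Nonempty ι] {n : ℕ}
    (hn : Fintype.card ι = n) (hp : ConicIndependent K p) (hg : ∀ i, 0 < g (p i)) :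
    ∃ e : Fin n ≃ ι, PositivelyOriented (p ∘ e) := by
  obtain ⟨o⟩ := ‹Nonempty ι›
  have hne {i j} (h : 0 < bracket (p o) (p i) (p j)) : o ≠ i ∧ o ≠ j ∧ i ≠ j :=
    ne_of_bracket_ne_zero h.ne'
  -- Angular order around `p o`, with `o` itself placed first.
  let r (i j : ι) : Prop := (i = o ∧ j ≠ o) ∨ 0 < bracket (p o) (p i) (p j)
  have hr : IsStrictTotalOrder ι r :=
    { irrefl := by
        rintro i (⟨h, h'⟩ | h)
        exacts [h' h, (hne h).2.2 rfl]
      trans := by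
        rintro i j k (⟨hi, hj⟩ | hij) (⟨hj', -⟩ | hjk)
        · exact absurd hj' hj
        · exact .inl ⟨hi, (hne hjk).2.1.symm⟩
        · exact absurd hj' (hne hij).2.1.symm
        · exact .inr (hp.bracket_pos_of_bracket_pos hg hij hjk).1
      trichotomous := by
        intro i j hij hji
        by_contra hij_ne
        by_cases hi : i = o
        · exact hij (.inl ⟨hi, fun hj => hij_ne (hi.trans hj.symm)⟩)
        by_cases hj : j = o
        · exact hji (.inl ⟨hj, hi⟩)
        rcases (hp.bracket_ne_zero hg (Ne.symm hi) (Ne.symm hj) hij_ne).lt_or_gt with h | h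
        · exact hji (.inr (by rwa [bracket_swap, neg_pos]))
        · exact hij (.inr h) }
  obtain ⟨e, he⟩ := exists_equiv_fin_of_isStrictTotalOrder hn r
  refine ⟨e, fun a b c hab hbc => ?_⟩
  rcases he a b hab, he b c hbc with ⟨⟨ha, hb⟩ | hab, ⟨hb', -⟩ | hbc⟩
  · exact absurd hb' hb
  · simpa [ha] using hbc
  · exact absurd hb' (hne hab).2.1.symm
  · exact (hp.bracket_pos_of_bracket_pos hg hab hbc).2

end Ordering

end PositivelyOriented

section CyclicInequalities

variable {R : Type*} [CommRing R] [LinearOrder R] [IsStrictOrderedRing R]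

theorem prod_mul_prod_lt_of_shift {G : Type*} [AddGroup G] [Fintype G] {u v w z : G → R}
    (hu : ∀ k, 0 < u k) (hv : ∀ k, 0 < v k) {c₁ c₂ c₃ c₄ : G}
    (h : ∀ k, u (k + c₁) * v (k + c₂) < w (k + c₃) * z (k + c₄)) :
    (∏ k, u k) * ∏ k, v k < (∏ k, w k) * ∏ k, z k := by
  have hshift (g : G → R) (c : G) : ∏ k, g (k + c) = ∏ k, g k :=
    Fintype.prod_equiv (Equiv.addRight c) _ _ fun _ => rfl
  have hlt := Finset.prod_lt_prod_of_nonempty (s := Finset.univ)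
    (fun k _ => mul_pos (hu (k + c₁)) (hv (k + c₂))) (fun k _ => h k) Finset.univ_nonempty
  simpa only [Finset.prod_mul_distrib, hshift] using hlt

theorem lt_of_mul_lt_mul_self_of_mul_lt_mul_self {x y z : R} (hy : 0 < y) (hz : 0 < z)
    (hxz : x * z < y * y) (hxy : x * y < z * z) : x < z := by
  by_contra! hzx
  have hzy : z < y := lt_of_mul_self_lt_mul_self₀ hy.le
    ((mul_le_mul_of_nonneg_right hzx hz.le).trans_lt hxz)
  have hzz : z * z ≤ x * y := mul_le_mul hzx hzy.le hz.le (hz.le.trans hzx)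
  exact hzz.not_gt hxy

theorem forall_fin_seven_of_forall_add_three {P : Fin 7 → Prop} (hP : ∀ k, P k → P (k + 3))
    {k : Fin 7} (hk : P k) (j : Fin 7) : P j := by
  have hiter (i : ℕ) : P (k + i • 3) := by
    induction i with
    | zero => simpa using hk
    | succ i ih =>
      rw [succ_nsmul, ← add_assoc]
      exact hP _ ih
  obtain ⟨i, rfl⟩ : ∃ i : Fin 7, j = k + (i : ℕ) • 3 := by
    clear * -
    decide +revert
  exact hiter i

theorem exists_cyclic_mul_le_mul {t a b : Fin 7 → R} (ht : ∀ k, 0 < t k) (ha : ∀ k, 0 < a k)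
    (hb : ∀ k, 0 < b k) (hab : ∀ k, t k * b (k + 1) < a k * a (k + 1))
    (hba : ∀ k, a k * t (k + 2) < b k * b (k + 1))
    (hmix : ∀ k, t k * t (k + 2) < b k * a (k + 1)) :
    ∃ k, t (k + 1) * t (k + 5) ≤ t k * b (k + 3) ∧ t (k + 4) * t k ≤ t (k + 5) * a (k + 1) := by
  by_contra! hbad
  have hTB : (∏ k, t k) * ∏ k, b k < (∏ k, a k) * ∏ k, a k :=
    prod_mul_prod_lt_of_shift ht hb (c₁ := 0) (c₃ := 0) (by simpa using hab)
  have hTA : (∏ k, t k) * ∏ k, a k < (∏ k, b k) * ∏ k, b k :=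
    prod_mul_prod_lt_of_shift ht ha (c₂ := 0) (c₃ := 0) (by simpa [mul_comm] using hba)
  have hT := Finset.prod_pos fun k (_ : k ∈ Finset.univ) => ht k
  have hA := Finset.prod_pos fun k (_ : k ∈ Finset.univ) => ha k
  have hB := Finset.prod_pos fun k (_ : k ∈ Finset.univ) => hb k
  by_cases hex : ∃ k, t k * b (k + 3) < t (k + 1) * t (k + 5)
  · obtain ⟨k, hk⟩ := hex
    have hstep {k} (hk : t k * b (k + 3) < t (k + 1) * t (k + 5)) :
        t (k + 3) * b (k + 3 + 3) < t (k + 3 + 1) * t (k + 3 + 5) := by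
      by_contra! hk'
      have hright := hbad (k + 3) hk'
      have hmix := hmix (k + 3)
      simp only [add_assoc, Fin.reduceAdd, add_zero] at hright hmix
      have hprod := mul_lt_mul'' hk hright (mul_pos (ht _) (hb _)).le (mul_pos (ht _) (ha _)).le
      linarith [mul_lt_mul_of_pos_left hmix (mul_pos (ht k) (ht (k + 1)))]
    have hall := forall_fin_seven_of_forall_add_three
      (P := fun k => t k * b (k + 3) < t (k + 1) * t (k + 5)) (fun _ => hstep) hk
    have hTT := prod_mul_prod_lt_of_shift ht hb (c₁ := 0) fun k => by simpa using hall k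
    exact lt_asymm (lt_of_mul_lt_mul_left hTT hT.le)
      (lt_of_mul_lt_mul_self_of_mul_lt_mul_self hA hB hTB hTA)
  · push Not at hex
    have hTT := prod_mul_prod_lt_of_shift ht ha (c₄ := 0)
      fun k => by simpa using hbad k (hex k)
    exact lt_asymm (lt_of_mul_lt_mul_left hTT hT.le)
      (lt_of_mul_lt_mul_self_of_mul_lt_mul_self hB hA hTA hTB)

end CyclicInequalities

section Heptagon

variable {K m : Type*} [Field K] [LinearOrder K]

theorem HasNonnegRankLE.of_add_eq_add [IsStrictOrderedRing K] {A : Matrix m (Fin 7) K}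
    (hA : ∀ i j, 0 ≤ A i j) (h₀₂ : ∀ i, A i 0 + A i 2 = A i 1 + A i 3)
    (h₀₅ : ∀ i, A i 0 + A i 5 = A i 4 + A i 6) (h₃₆ : ∀ i, A i 0 ≤ A i 3 + A i 6)
    (h₁₄ : ∀ i, A i 0 ≤ A i 1 + A i 4) : HasNonnegRankLE A 6 := by
  let U (i : m) : Fin 3 → K := ![0, A i 3 - A i 0, A i 4 - A i 0]
  let W (i : m) : Fin 3 → K := ![A i 0, A i 6, A i 1]
  let e : Fin 7 → Fin 3 × Fin 3 := ![(0, 0), (0, 2), (1, 2), (1, 0), (2, 0), (2, 1), (0, 1)]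
  have hcols : A = (of fun i (x : Fin 3 × Fin 3) => U i x.1 + W i x.2).submatrix id e := by
    ext i j
    fin_cases j <;>
      simp only [U, W, e, submatrix_apply, of_apply, id_eq, cons_val, Fin.reduceFinMk, Fin.zero_eta,
        Fin.mk_one] <;>
      linarith [h₀₂ i, h₀₅ i]
  have htable : ∀ i a b, 0 ≤ U i a + W i b := by
    intro i a b
    fin_cases a <;> fin_cases b <;>
      simp only [U, W, cons_val, Fin.reduceFinMk, Fin.zero_eta, Fin.mk_one] <;>
      linarith [h₀₂ i, h₀₅ i, h₃₆ i, h₁₄ i, hA i 0, hA i 1, hA i 2, hA i 3, hA i 4, hA i 5, hA i 6]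
  rw [hcols]
  exact (of_fst_add_snd htable).submatrix_cols e

/-- The coefficients of the linear relations among `p 0, p 1, p 2, p 3` and among
`p 0, p 4, p 5, p 6`, up to sign and scaled to agree at `p 0`. Rescaling the vectors `p j` by these
weights turns both quadruples into parallelograms. -/
def parallelogramWeight (p : Fin 7 → Fin 3 → K) : Fin 7 → K :=
  ![bracket (p 1) (p 2) (p 3) * bracket (p 4) (p 5) (p 6),
    bracket (p 0) (p 2) (p 3) * bracket (p 4) (p 5) (p 6),
    bracket (p 0) (p 1) (p 3) * bracket (p 4) (p 5) (p 6),
    bracket (p 0) (p 1) (p 2) * bracket (p 4) (p 5) (p 6),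
    bracket (p 0) (p 5) (p 6) * bracket (p 1) (p 2) (p 3),
    bracket (p 0) (p 4) (p 6) * bracket (p 1) (p 2) (p 3),
    bracket (p 0) (p 4) (p 5) * bracket (p 1) (p 2) (p 3)]

/-- The condition on a heptagon under which the two parallelograms at `p 0` given by
`parallelogramWeight` extend to a nonnegative `3 × 3` table of sums. -/
def IsBalanced (p : Fin 7 → Fin 3 → K) : Prop :=
  bracket (p 1) (p 2) (p 3) * bracket (p 0) (p 5) (p 6) ≤
      bracket (p 0) (p 1) (p 2) * bracket (p 3) (p 5) (p 6) ∧
    bracket (p 4) (p 5) (p 6) * bracket (p 0) (p 1) (p 2) ≤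
      bracket (p 0) (p 5) (p 6) * bracket (p 1) (p 2) (p 4)

variable [IsStrictOrderedRing K] {p : Fin 7 → Fin 3 → K}

theorem PositivelyOriented.parallelogramWeight_pos (hp : PositivelyOriented p) (j : Fin 7) :
    0 < parallelogramWeight p j := by
  fin_cases j <;> refine mul_pos (hp _ _ _ ?_ ?_) (hp _ _ _ ?_ ?_) <;> decide

section MissingSums

variable {f : Dual K (Fin 3 → K)}

theorem IsBalanced.weight_zero_le_three_add_six (hbal : IsBalanced p) (hp : PositivelyOriented p)
    (hf : ∀ j, 0 ≤ f (p j)) :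
    parallelogramWeight p 0 * f (p 0) ≤
      parallelogramWeight p 3 * f (p 3) + parallelogramWeight p 6 * f (p 6) := by
  have h₁₂₃ := hp 1 2 3 (by decide) (by decide)
  have h₄₅₆ := hp 4 5 6 (by decide) (by decide)
  have hlt := hp.bracket_mul_bracket_lt_of_common_fourth (i := 0) (j := 3) (k := 4) (l := 5)
    (m := 6) (by decide) (by decide) (by decide) (by decide)
  refine mul_apply_le_of_bracket_le (hf 3) (hf 5) (hf 6) (hp.parallelogramWeight_pos 0).le
    (hp 3 5 6 (by decide) (by decide)) (hp 0 3 6 (by decide) (by decide)).le ?_ ?_ <;>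
    simp only [parallelogramWeight, cons_val]
  · linarith [mul_le_mul_of_nonneg_left hbal.1 h₄₅₆.le]
  · linarith [mul_lt_mul_of_pos_left hlt h₁₂₃]

theorem IsBalanced.weight_zero_le_one_add_four (hbal : IsBalanced p) (hp : PositivelyOriented p)
    (hf : ∀ j, 0 ≤ f (p j)) :
    parallelogramWeight p 0 * f (p 0) ≤
      parallelogramWeight p 1 * f (p 1) + parallelogramWeight p 4 * f (p 4) := by
  have h₁₂₃ := hp 1 2 3 (by decide) (by decide)
  have h₄₅₆ := hp 4 5 6 (by decide) (by decide)
  have hlt := (hp.bracket_mul_bracket_lt_of_common_third (i := 0) (j := 1) (k := 2) (l := 3)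
    (m := 4) (by decide) (by decide) (by decide) (by decide)).2
  refine mul_apply_le_of_bracket_le (hf 1) (hf 2) (hf 4) (hp.parallelogramWeight_pos 0).le
    (hp 1 2 4 (by decide) (by decide)) (hp 0 1 4 (by decide) (by decide)).le ?_ ?_ <;>
    simp only [parallelogramWeight, cons_val]
  · linarith [mul_lt_mul_of_pos_left hlt h₄₅₆]
  · linarith [mul_le_mul_of_nonneg_left hbal.2 h₁₂₃.le]

end MissingSums

theorem IsBalanced.hasNonnegRankLE_six (hbal : IsBalanced p) (hp : PositivelyOriented p)
    {A : Matrix m (Fin 7) K} (hA : ∀ i j, 0 ≤ A i j) {f : m → Dual K (Fin 3 → K)}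
    (hAf : ∀ i j, A i j = f i (p j)) : HasNonnegRankLE A 6 := by
  have hf (i j) : 0 ≤ f i (p j) := hAf i j ▸ hA i j
  have hw := hp.parallelogramWeight_pos
  refine .of_mul_diagonal hw (.of_add_eq_add (fun i j => ?_) (fun i => ?_) (fun i => ?_)
    (fun i => ?_) (fun i => ?_)) <;>
    simp only [mul_diagonal, hAf, mul_comm _ (parallelogramWeight p _)]
  · exact mul_nonneg (hw j).le (hf i j)
  · simp only [parallelogramWeight, cons_val]
    linear_combination bracket (p 4) (p 5) (p 6) *
      bracket_cramer_apply (f i) (p 0) (p 1) (p 2) (p 3)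
  · simp only [parallelogramWeight, cons_val]
    linear_combination bracket (p 1) (p 2) (p 3) *
      bracket_cramer_apply (f i) (p 0) (p 4) (p 5) (p 6)
  · exact hbal.weight_zero_le_three_add_six hp (hf i)
  · exact hbal.weight_zero_le_one_add_four hp (hf i)

theorem PositivelyOriented.exists_isBalanced_rotate (hp : PositivelyOriented p) :
    ∃ k, IsBalanced fun i => p (k + i) := by
  have h₀₁ : (0 : Fin 7) < 1 := by decide
  have h₁₂ : (1 : Fin 7) < 2 := by decide
  have h₂₃ : (2 : Fin 7) < 3 := by decide
  have h₃₄ : (3 : Fin 7) < 4 := by decide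
  have hab (k) := (hp.rotate k).bracket_mul_bracket_lt_of_common_second h₀₁ h₁₂ h₂₃ h₃₄
  have hba (k) := (hp.rotate k).bracket_mul_bracket_lt_of_common_fourth h₀₁ h₁₂ h₂₃ h₃₄
  have hmix (k) := ((hp.rotate k).bracket_mul_bracket_lt_of_common_third h₀₁ h₁₂ h₂₃ h₃₄).1
  obtain ⟨k, hk⟩ := exists_cyclic_mul_le_mul
    (t := fun k => bracket (p (k + 0)) (p (k + 1)) (p (k + 2)))
    (a := fun k => bracket (p (k + 0)) (p (k + 1)) (p (k + 3)))
    (b := fun k => bracket (p (k + 0)) (p (k + 2)) (p (k + 3)))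
    (fun k => hp.rotate k 0 1 2 h₀₁ h₁₂) (fun k => hp.rotate k 0 1 3 h₀₁ (h₁₂.trans h₂₃))
    (fun k => hp.rotate k 0 2 3 (h₀₁.trans h₁₂) h₂₃)
    (by simpa only [add_assoc, Fin.reduceAdd] using hab)
    (by simpa only [add_assoc, Fin.reduceAdd] using hba)
    (by simpa only [add_assoc, Fin.reduceAdd] using hmix)
  simp only [add_assoc, Fin.reduceAdd, bracket_rotate (p (k + 0))] at hk
  exact ⟨k, hk⟩

end Heptagon

section RankThree

variable {K m n : Type*} [Field K] [LinearOrder K] [IsStrictOrderedRing K]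

theorem hasNonnegRankLE_six_of_rank_le_three {A : Matrix m (Fin 7) K} (hA : ∀ i j, 0 ≤ A i j)
    (hrank : A.rank ≤ 3) : HasNonnegRankLE A 6 := by
  by_cases hcol : ConicIndependent K A.col
  case neg => exact .of_not_conicIndependent_col hA hcol
  obtain ⟨f, p, hAf⟩ := exists_dual_of_rank_le hrank
  have hcols : A.col = LinearMap.pi f ∘ p := funext₂ fun j i => hAf i j
  have hp : ConicIndependent K p := .of_map (LinearMap.pi f) (hcols ▸ hcol)
  have hrow (j) : ∃ i, 0 < A i j := by
    obtain ⟨i, hi⟩ := Function.ne_iff.1 (hcol.ne_zero j)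
    exact ⟨i, (hA i j).lt_of_ne' hi⟩
  choose r hr using hrow
  have hg (j) : 0 < (∑ l, f (r l)) (p j) := by
    simp only [LinearMap.sum_apply, ← hAf]
    exact Finset.sum_pos' (fun _ _ => hA _ _) ⟨j, Finset.mem_univ j, hr j⟩
  obtain ⟨e, he⟩ := hp.exists_equiv_positivelyOriented (Fintype.card_fin 7) hg
  obtain ⟨k, hk⟩ := he.exists_isBalanced_rotate
  let σ : Fin 7 ≃ Fin 7 := (Equiv.addLeft k).trans e
  have hσ : HasNonnegRankLE (A.submatrix id σ) 6 :=
    hk.hasNonnegRankLE_six (he.rotate k) (fun _ _ => hA _ _) fun i j => hAf i (σ j)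
  simpa using hσ.submatrix_cols σ.symm

theorem nonneg_rank_lt_of_rank_three_general [Fintype n] (hn : 7 ≤ Fintype.card n)
    (A : Matrix m n K) (hA : ∀ i j, 0 ≤ A i j) (hrank : A.rank ≤ 3) :
    ∃ k < Fintype.card n, HasNonnegRankLE A k := by
  obtain ⟨e⟩ := Function.Embedding.nonempty_of_card_le ((Fintype.card_fin 7).trans_le hn)
  have hseven : HasNonnegRankLE (A.submatrix id e) 6 :=
    hasNonnegRankLE_six_of_rank_le_three (fun _ _ => hA _ _)
      ((A.rank_submatrix_le id e).trans hrank)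
  refine ⟨_, ?_, .of_submatrix_embedding hA e hseven⟩
  rw [Fintype.card_fin]
  omega

end RankThree

/-- If `n ≥ 7`, every rank-three nonnegative m×n real matrix has
nonnegative rank strictly less than `n`: it admits a nonnegative factorization
through some `k < n`. -/
theorem nonneg_rank_lt_of_rank_three (m n : ℕ) (hn : 7 ≤ n)
    (A : Matrix (Fin m) (Fin n) ℝ)
    (hA : ∀ i j, 0 ≤ A i j) (hrank : A.rank = 3) :
    ∃ k : ℕ, k < n ∧
      ∃ (B : Matrix (Fin m) (Fin k) ℝ) (C : Matrix (Fin k) (Fin n) ℝ),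
        (∀ i j, 0 ≤ B i j) ∧ (∀ i j, 0 ≤ C i j) ∧ A = B * C := by
  simpa [HasNonnegRankLE] using
    nonneg_rank_lt_of_rank_three_general (by simpa using hn) A hA hrank.le
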